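/- arXiv:1502.03184 — 2 statements merged into one kernel-verified Lean document; each statement's English description precedes it below -/
import Mathlib

section
/- Let k be a field of characteristic p > 2 with [k : k^p] < ∞ and let f = x²y² + y²z² + z²x² ∈ R = k[x, y, z]. Then the test ideal τ(f^{1−1/p}) equals the maximal ideal m = (x, y, z); in particular R/fR has an isolated non-F-pure point at m. -/
/-!
Write `R = k[x, y, z]`, `q = p - 1`. Expanding `f ^ q` produces the monomials
`x^(2n) y^(2(b+q-n)) z^(2(q-b))` for `b ≤ n ≤ q`; the three exponents add up to `4q > 3q`, so one
of them is at least `p`, whence `f ^ q ∈ m^{[p]}` and `τ ⊆ m`.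

For the converse, a retraction `k → k^p` of `k^p`-vector spaces, followed by the inverse of
Frobenius, is an additive map `σ : k → k` with `σ (a ^ p * b) = a * σ b` and `σ 1 = 1`
(`exists_frobenius_splitting`). For an exponent vector `s` with all entries `< p` it yields a
Cartier-type map `φ : R → R` with `coeff m (φ g) = σ (coeff (p m + s) g)` and
`φ (r ^ p * g) = r * φ g` (`exists_cartier`); such a map sends `a^{[p]}` into `a` for every ideal
`a`. For `s = (p-2, p-1, p-1)` the only monomial of `f ^ q` that survives is `x^(2q) y^q z^q`, with
coefficient `choose q (q/2)`, a unit mod `p`. So `f ^ q ∈ a^{[p]}` forces `x ∈ a`, and by symmetry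
`m ⊆ a`. Since `m` is the kernel of the constant coefficient, it is prime, hence radical.
-/

open MvPolynomial

noncomputable section

/-- `I^{[e]}`-style bracket power: the ideal generated by `q`-th powers of elements of `I`. -/
def bracketPow {A : Type*} [CommRing A] (I : Ideal A) (q : ℕ) : Ideal A :=
  Ideal.span ((fun u => u ^ q) '' (I : Set A))

/-- The test ideal `τ(f^{1 - 1/p^e})`: the smallest ideal `a` with `f^{p^e - 1} ∈ a^{[e]}`. -/
def testIdeal {A : Type*} [CommRing A] (p : ℕ) (f : A) (e : ℕ) : Ideal A :=
  sInf {a : Ideal A | f ^ (p ^ e - 1) ∈ bracketPow a (p ^ e)}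

/-- The homogeneous maximal ideal `m = (x_0, ..., x_n)`. -/
def mxI (k : Type*) [Field k] (n : ℕ) : Ideal (MvPolynomial (Fin (n + 1)) k) :=
  Ideal.span (Set.range (X : Fin (n + 1) → MvPolynomial (Fin (n + 1)) k))

/-- The set of degrees of homogeneous elements of `(m^{[e]} : τ) \ m^{[e]}`. -/
def MeSet (k : Type*) [Field k] (n p : ℕ) (τ : Ideal (MvPolynomial (Fin (n + 1)) k))
    (e : ℕ) : Set ℕ :=
  {d : ℕ | ∃ g : MvPolynomial (Fin (n + 1)) k,
    g ∈ (bracketPow (mxI k n) (p ^ e)).colon τ ∧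
    g ∉ bracketPow (mxI k n) (p ^ e) ∧ g.IsHomogeneous d}

/-- `M_e`: the minimal degree of a homogeneous element of `(m^{[e]} : τ) \ m^{[e]}`. -/
def Me (k : Type*) [Field k] (n p : ℕ) (τ : Ideal (MvPolynomial (Fin (n + 1)) k))
    (e : ℕ) : ℕ :=
  sInf (MeSet k n p τ e)

/-- `e_0`: the least `e` with `τ ⊄ m^{[e]}`. -/
def e0 (k : Type*) [Field k] (n p : ℕ) (τ : Ideal (MvPolynomial (Fin (n + 1)) k)) : ℕ :=
  sInf {e : ℕ | ¬ τ ≤ bracketPow (mxI k n) (p ^ e)}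

/-- A `p⁻¹`-linear splitting of Frobenius on a field; no finiteness of `k` over `k ^ p` is needed,
since any subspace of a vector space has a complement. -/
lemma exists_frobenius_splitting (k : Type*) [Field k] (p : ℕ) [Fact p.Prime] [CharP k p] :
    ∃ σ : k →+ k, (∀ a b, σ (a ^ p * b) = a * σ b) ∧ σ 1 = 1 := by
  let K := (frobenius k p).fieldRange
  obtain ⟨L, hL⟩ := (Algebra.linearMap K k).exists_leftInverse_of_injective
    (LinearMap.ker_eq_bot.2 (algebraMap K k).injective)
  let E := (frobenius k p).rangeRestrictFieldEquiv
  refine ⟨(E.symm : K →+* k).toAddMonoidHom.comp L.toAddMonoidHom, ?_, ?_⟩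
  · intro a b
    have h : a ^ p * b = E a • b := rfl
    change E.symm (L (a ^ p * b)) = a * E.symm (L b)
    rw [h, map_smul, smul_eq_mul, map_mul, RingEquiv.symm_apply_apply]
  · have h := LinearMap.congr_fun hL 1
    simp only [LinearMap.comp_apply, Algebra.linearMap_apply, map_one, LinearMap.id_apply] at h
    change E.symm (L 1) = 1
    rw [h, map_one]

/-- The Cartier-type operator picking out the exponents congruent to `s` modulo `p`. The bound on
`s` makes `p t ≤ p m + s` equivalent to `t ≤ m`, which gives the `p⁻¹`-linearity. -/
lemma exists_cartier {k ι : Type*} [Field k] (p : ℕ) [Fact p.Prime] [CharP k p]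
    (σ : k →+ k) (hσ : ∀ a b, σ (a ^ p * b) = a * σ b) (s : ι →₀ ℕ) (hs : ∀ i, s i < p) :
    ∃ φ : MvPolynomial ι k →+ MvPolynomial ι k,
      (∀ m g, coeff m (φ g) = σ (coeff (p • m + s) g)) ∧
      ∀ r g, φ (r ^ p * g) = r * φ g := by
  have hp : 0 < p := (Fact.out : p.Prime).pos
  have hinj : Function.Injective (fun m : ι →₀ ℕ => p • m + s) := by
    intro m m' h
    ext i
    have := DFunLike.congr_fun h i
    simpa [hp.ne'] using this
  let F : MvPolynomial ι k → MvPolynomial ι k := fun g =>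
    AddMonoidAlgebra.ofCoeff (Finsupp.mapRange σ σ.map_zero
      (Finsupp.comapDomain (fun m : ι →₀ ℕ => p • m + s) (AddMonoidAlgebra.coeff g)
        hinj.injOn))
  have hF : ∀ m g, coeff m (F g) = σ (coeff (p • m + s) g) := fun m g => rfl
  let φ : MvPolynomial ι k →+ MvPolynomial ι k :=
    { toFun := F
      map_zero' := by ext m; simp [hF]
      map_add' := fun g h => by ext m; simp [hF] }
  have hφ : ∀ m g, coeff m (φ g) = σ (coeff (p • m + s) g) := hF
  refine ⟨φ, hφ, fun r g => ?_⟩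
  induction r using MvPolynomial.induction_on' with
  | add r r' ih ih' => rw [add_pow_char, add_mul, map_add, ih, ih', add_mul]
  | monomial t c =>
    ext m
    rw [hφ, monomial_pow, coeff_monomial_mul', coeff_monomial_mul']
    have hiff : p • t ≤ p • m + s ↔ t ≤ m := by
      refine ⟨fun h i => ?_, fun h i => ?_⟩
      · have h1 := h i
        have h2 := hs i
        simp only [Finsupp.coe_add, Finsupp.coe_smul, Pi.add_apply, Pi.smul_apply,
          smul_eq_mul] at h1
        by_contra h3
        have h4 : p * (m i + 1) ≤ p * t i := Nat.mul_le_mul_left p (by omega)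
        rw [mul_add] at h4
        omega
      · have := Nat.mul_le_mul_left p (h i)
        simp only [Finsupp.coe_add, Finsupp.coe_smul, Pi.add_apply, Pi.smul_apply,
          smul_eq_mul]
        omega
    by_cases h : t ≤ m
    · rw [if_pos (hiff.2 h), if_pos h, hσ, hφ]
      congr 3
      ext i
      have := Nat.mul_le_mul_left p (h i)
      simp only [Finsupp.coe_add, Finsupp.coe_smul, Pi.add_apply, Pi.smul_apply,
        smul_eq_mul, Finsupp.coe_tsub, Pi.sub_apply, Nat.mul_sub]
      omega
    · rw [if_neg (fun h' => h (hiff.1 h')), if_neg h, map_zero]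

/-- A `p⁻¹`-linear additive map sends `a^{[p]}` into `a`. -/
lemma cartier_mem {A : Type*} [CommRing A] {q : ℕ} (φ : A →+ A)
    (hφ : ∀ r g, φ (r ^ q * g) = r * φ g) (a : Ideal A) {g : A} (hg : g ∈ bracketPow a q) :
    φ g ∈ a := by
  unfold bracketPow Ideal.span at hg
  rw [Submodule.mem_span_set'] at hg
  obtain ⟨n, c, u, rfl⟩ := hg
  rw [map_sum]
  refine sum_mem fun t _ => ?_
  obtain ⟨v, hv, hvu⟩ := (u t).2
  rw [← hvu, smul_eq_mul, mul_comm, hφ]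
  exact a.mul_mem_right _ hv

/-- The expansion of `f ^ q`, with `f` read as `x²(y² + z²) + y²z²`. -/
lemma f_pow_expand {k : Type*} [Field k] (i j l : Fin (2 + 1)) (q : ℕ) :
    ((X i) ^ 2 * (X j) ^ 2 + (X j) ^ 2 * (X l) ^ 2 + (X l) ^ 2 * (X i) ^ 2 :
        MvPolynomial (Fin (2 + 1)) k) ^ q =
      ∑ n ∈ Finset.range (q + 1), ∑ b ∈ Finset.range (n + 1),
        monomial (Finsupp.single i (2 * n) + Finsupp.single j (2 * (b + (q - n))) +
          Finsupp.single l (2 * (n - b + (q - n)))) ((q.choose n * n.choose b : ℕ) : k) := by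
  have h1 : ((X i) ^ 2 * (X j) ^ 2 + (X j) ^ 2 * (X l) ^ 2 + (X l) ^ 2 * (X i) ^ 2 :
      MvPolynomial (Fin (2 + 1)) k) =
      X i ^ 2 * (X j ^ 2 + X l ^ 2) + X j ^ 2 * X l ^ 2 := by ring
  rw [h1, add_pow]
  refine Finset.sum_congr rfl fun n _ => ?_
  rw [mul_pow, add_pow, Finset.mul_sum, Finset.sum_mul, Finset.sum_mul]
  refine Finset.sum_congr rfl fun b _ => ?_
  have h2 : ∀ (u v w c : ℕ), (monomial (Finsupp.single i u + Finsupp.single j v +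
      Finsupp.single l w) (c : k)) = X i ^ u * X j ^ v * X l ^ w * (c : MvPolynomial _ k) := by
    intro u v w c
    rw [X_pow_eq_monomial, X_pow_eq_monomial, X_pow_eq_monomial, monomial_mul, monomial_mul,
      ← map_natCast (C : k →+* MvPolynomial (Fin (2 + 1)) k), mul_comm, C_mul_monomial]
    simp
  rw [h2]
  push_cast
  ring

/-- If `f ^ (p - 1) ∈ a^{[p]}`, applying the Cartier operator for `s = (p-2, p-1, p-1)` leaves a
unit multiple of a single variable. The indices `i, j, l` are a permutation of the variables,
so that all three cases are covered at once. -/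
lemma X_mem_of_mem_bracketPow {k : Type*} [Field k] {p : ℕ} [Fact p.Prime] [CharP k p]
    (hp : 2 < p) {i j l : Fin (2 + 1)} (hij : i ≠ j) (hjl : j ≠ l) (hil : i ≠ l)
    (a : Ideal (MvPolynomial (Fin (2 + 1)) k))
    (ha : ((X i) ^ 2 * (X j) ^ 2 + (X j) ^ 2 * (X l) ^ 2 + (X l) ^ 2 * (X i) ^ 2 :
        MvPolynomial (Fin (2 + 1)) k) ^ (p - 1) ∈ bracketPow a p) :
    X i ∈ a := by
  have hpr : p.Prime := Fact.out
  obtain ⟨σ, hσ, hσ1⟩ := exists_frobenius_splitting k p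
  have hσn : ∀ n : ℕ, σ (n : k) = n := fun n => by
    rw [← nsmul_one, map_nsmul, hσ1]
  have hodd : p % 2 = 1 := hpr.eq_two_or_odd.resolve_left (by omega)
  let s : Fin (2 + 1) →₀ ℕ :=
    Finsupp.single i (p - 2) + Finsupp.single j (p - 1) + Finsupp.single l (p - 1)
  have cov : ∀ t, t = i ∨ t = j ∨ t = l := by omega
  have ext3 : ∀ u v : Fin (2 + 1) →₀ ℕ, u = v ↔ u i = v i ∧ u j = v j ∧ u l = v l := by
    intro u v
    refine ⟨by rintro rfl; simp, fun h => ?_⟩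
    ext t
    rcases cov t with rfl | rfl | rfl
    exacts [h.1, h.2.1, h.2.2]
  have vals : ∀ u v w : ℕ,
      (Finsupp.single i u + Finsupp.single j v + Finsupp.single l w) i = u ∧
      (Finsupp.single i u + Finsupp.single j v + Finsupp.single l w) j = v ∧
      (Finsupp.single i u + Finsupp.single j v + Finsupp.single l w) l = w := by
    intro u v w
    simp [hij, hjl, hil, hij.symm, hjl.symm, hil.symm]
  have hs : ∀ t, s t < p := by
    intro t
    have hv := vals (p - 2) (p - 1) (p - 1)
    rcases cov t with rfl | rfl | rfl
    · exact hv.1.trans_lt (by omega)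
    · exact hv.2.1.trans_lt (by omega)
    · exact hv.2.2.trans_lt (by omega)
  obtain ⟨φ, hφ, hlin⟩ := exists_cartier p σ hσ s hs
  have hmem := cartier_mem φ hlin a ha
  -- Comparing exponents of `j` and `l` modulo `p` isolates the term `n = q`, `b = q / 2`.
  have hval : φ (((X i) ^ 2 * (X j) ^ 2 + (X j) ^ 2 * (X l) ^ 2 + (X l) ^ 2 * (X i) ^ 2 :
        MvPolynomial (Fin (2 + 1)) k) ^ (p - 1)) =
      C (((p - 1).choose ((p - 1) / 2) : ℕ) : k) * X i := by
    rw [f_pow_expand]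
    ext m
    rw [hφ, coeff_sum, map_sum, coeff_C_mul, coeff_X]
    have hcond : ∀ n b, n ≤ p - 1 → b ≤ n →
        (Finsupp.single i (2 * n) + Finsupp.single j (2 * (b + (p - 1 - n))) +
          Finsupp.single l (2 * (n - b + (p - 1 - n))) = p • m + s ↔
        n = p - 1 ∧ b = (p - 1) / 2 ∧ Finsupp.single i 1 = m) := by
      intro n b hn hb
      have hv := vals (2 * n) (2 * (b + (p - 1 - n))) (2 * (n - b + (p - 1 - n)))
      have hw := vals (p - 2) (p - 1) (p - 1)
      have h1i : (Finsupp.single i 1 : Fin (2 + 1) →₀ ℕ) i = 1 := by simp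
      have h1j : (Finsupp.single i 1 : Fin (2 + 1) →₀ ℕ) j = 0 := by simp [hij.symm]
      have h1l : (Finsupp.single i 1 : Fin (2 + 1) →₀ ℕ) l = 0 := by simp [hil.symm]
      rw [ext3, ext3, hv.1, hv.2.1, hv.2.2, h1i, h1j, h1l]
      simp only [Finsupp.coe_add (p • m), Finsupp.coe_smul, Pi.add_apply (p • ⇑m), Pi.smul_apply,
        smul_eq_mul]
      rw [show s i = p - 2 from hw.1, show s j = p - 1 from hw.2.1, show s l = p - 1 from hw.2.2]
      generalize m i = x, m j = y, m l = z
      constructor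
      · rintro ⟨hx, hy, hz⟩
        have z0 : z = 0 := by
          by_contra h
          have := Nat.mul_le_mul_left p (Nat.one_le_iff_ne_zero.2 h)
          omega
        subst z0
        have y0 : y = 0 := by
          by_contra h
          have := Nat.mul_le_mul_left p (Nat.one_le_iff_ne_zero.2 h)
          omega
        subst y0
        have hnn : n = p - 1 := by omega
        refine ⟨hnn, by omega, ?_, rfl, rfl⟩
        have : p * x = p * 1 := by omega
        exact (Nat.eq_of_mul_eq_mul_left hpr.pos this).symm
      · rintro ⟨rfl, rfl, rfl, rfl, rfl⟩
        omega
    have hterm : ∀ n ∈ Finset.range (p - 1 + 1),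
        σ (coeff (p • m + s) (∑ b ∈ Finset.range (n + 1),
          monomial (Finsupp.single i (2 * n) + Finsupp.single j (2 * (b + (p - 1 - n))) +
            Finsupp.single l (2 * (n - b + (p - 1 - n))))
            (((p - 1).choose n * n.choose b : ℕ) : k))) =
        if n = p - 1 then ((p - 1).choose ((p - 1) / 2) : k) *
          (if Finsupp.single i 1 = m then 1 else 0) else 0 := by
      intro n hn
      have hn' : n ≤ p - 1 := by simpa [Nat.lt_succ_iff] using hn
      rw [coeff_sum, map_sum]
      have h3 : ∀ b ∈ Finset.range (n + 1), σ (coeff (p • m + s)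
          (monomial (Finsupp.single i (2 * n) + Finsupp.single j (2 * (b + (p - 1 - n))) +
            Finsupp.single l (2 * (n - b + (p - 1 - n))))
            (((p - 1).choose n * n.choose b : ℕ) : k))) =
          if b = (p - 1) / 2 then (if n = p - 1 then ((p - 1).choose ((p - 1) / 2) : k) *
          (if Finsupp.single i 1 = m then 1 else 0) else 0) else 0 := by
        intro b hb
        have hb' : b ≤ n := by simpa [Nat.lt_succ_iff] using hb
        rw [coeff_monomial, if_congr (hcond n b hn' hb') rfl rfl, apply_ite σ, map_zero, hσn]
        by_cases e1 : n = p - 1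
        · by_cases e2 : b = (p - 1) / 2
          · by_cases e3 : Finsupp.single i 1 = m <;> simp [e1, e2, e3]
          · simp [e2]
        · simp [e1]
      rw [Finset.sum_congr rfl h3, Finset.sum_ite_eq']
      by_cases e1 : n = p - 1
      · rw [if_pos (Finset.mem_range.2 (by omega))]
      · simp [e1]
    rw [Finset.sum_congr rfl hterm, Finset.sum_ite_eq', if_pos (by simp)]
  rw [hval] at hmem
  have hc : (((p - 1).choose ((p - 1) / 2) : ℕ) : k) ≠ 0 := by
    rw [Ne, CharP.cast_eq_zero_iff k p]
    intro hd
    have := (hpr.dvd_factorial).1 (hd.trans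
      (Nat.choose_mul_factorial_mul_factorial (Nat.div_le_self (p - 1) 2) ▸
        Dvd.intro _ (mul_assoc _ _ _).symm))
    omega
  have := a.mul_mem_left (C (((p - 1).choose ((p - 1) / 2) : ℕ) : k)⁻¹) hmem
  rwa [← mul_assoc, ← C_mul, inv_mul_cancel₀ hc, C_1, one_mul] at this

lemma f_pow_mem_bracketPow {k : Type*} [Field k] {p : ℕ} (hp : 1 < p) :
    ((X 0) ^ 2 * (X 1) ^ 2 + (X 1) ^ 2 * (X 2) ^ 2 + (X 2) ^ 2 * (X 0) ^ 2 :
        MvPolynomial (Fin (2 + 1)) k) ^ (p - 1) ∈ bracketPow (mxI k 2) p := by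
  rw [f_pow_expand]
  refine sum_mem fun n hn => sum_mem fun b hb => ?_
  have hn' : n ≤ p - 1 := by simpa [Nat.lt_succ_iff] using hn
  have hb' : b ≤ n := by simpa [Nat.lt_succ_iff] using hb
  have key : ∀ (t : Fin (2 + 1)) (d : Fin (2 + 1) →₀ ℕ) (c : k), p ≤ d t →
      monomial d c ∈ bracketPow (mxI k 2) p := by
    intro t d c h
    have h1 : (X t : MvPolynomial (Fin (2 + 1)) k) ^ p ∈ bracketPow (mxI k 2) p :=
      Ideal.subset_span ⟨X t, Ideal.subset_span ⟨t, rfl⟩, rfl⟩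
    refine Ideal.mem_of_dvd _ ?_ h1
    rw [X_pow_eq_monomial, monomial_dvd_monomial]
    exact ⟨Or.inr (by simpa using h), one_dvd _⟩
  -- The three exponents add up to `4 (p - 1)`, so they cannot all be at most `p - 1`.
  have h3 : p ≤ 2 * n ∨ p ≤ 2 * (b + (p - 1 - n)) ∨ p ≤ 2 * (n - b + (p - 1 - n)) := by omega
  rcases h3 with h | h | h
  · exact key 0 _ _ (by simpa using h)
  · exact key 1 _ _ (by simpa using h)
  · exact key 2 _ _ (by simpa using h)

lemma mxI_isPrime (k : Type*) [Field k] : (mxI k 2).IsPrime := by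
  have : mxI k 2 = RingHom.ker (constantCoeff : MvPolynomial (Fin (2 + 1)) k →+* k) := by
    ext g
    rw [mxI, ← Set.image_univ, mem_ideal_span_X_image, RingHom.mem_ker, constantCoeff_eq]
    constructor
    · intro h
      by_contra h0
      obtain ⟨i, -, hi⟩ := h 0 (mem_support_iff.2 h0)
      exact hi rfl
    · intro h m hm
      by_contra! hc
      have : m = 0 := Finsupp.ext fun i => hc i (Set.mem_univ i)
      exact mem_support_iff.1 hm (this ▸ h)
  rw [this]
  exact RingHom.ker_isPrime _

/-- For a field `k` of characteristic `p > 2` and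
`f = x²y² + y²z² + z²x² ∈ k[x, y, z]`, the test ideal `τ(f^{1−1/p})` equals `m = (x, y, z)`;
in particular `√τ(f^{1−1/p}) = m`, i.e. `R/fR` has an isolated non-F-pure point at `m`. -/
theorem testIdeal_example_eq_maxIdeal {k : Type*} [Field k] {p : ℕ}
    [Fact p.Prime] [CharP k p] (hp : 2 < p) :
    testIdeal p
        ((X 0) ^ 2 * (X 1) ^ 2 + (X 1) ^ 2 * (X 2) ^ 2 + (X 2) ^ 2 * (X 0) ^ 2 :
          MvPolynomial (Fin (2 + 1)) k) 1 = mxI k 2 ∧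
      (testIdeal p
          ((X 0) ^ 2 * (X 1) ^ 2 + (X 1) ^ 2 * (X 2) ^ 2 + (X 2) ^ 2 * (X 0) ^ 2 :
            MvPolynomial (Fin (2 + 1)) k) 1).radical = mxI k 2 := by
  have h : testIdeal p
      ((X 0) ^ 2 * (X 1) ^ 2 + (X 1) ^ 2 * (X 2) ^ 2 + (X 2) ^ 2 * (X 0) ^ 2 :
        MvPolynomial (Fin (2 + 1)) k) 1 = mxI k 2 := by
    unfold testIdeal
    simp only [pow_one]
    apply le_antisymm
    · exact sInf_le (f_pow_mem_bracketPow (by omega))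
    · refine le_sInf fun a ha => ?_
      rw [mxI, Ideal.span_le]
      rintro _ ⟨t, rfl⟩
      have ha' := ha
      rw [Set.mem_ofPred_eq] at ha'
      fin_cases t
      · exact X_mem_of_mem_bracketPow hp (i := 0) (j := 1) (l := 2)
          (by decide) (by decide) (by decide) a ha'
      · refine X_mem_of_mem_bracketPow hp (i := 1) (j := 2) (l := 0)
          (by decide) (by decide) (by decide) a ?_
        convert ha' using 2
        ring
      · refine X_mem_of_mem_bracketPow hp (i := 2) (j := 0) (l := 1)
          (by decide) (by decide) (by decide) a ?_
        convert ha' using 2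
        ring
  exact ⟨h, by rw [h]; exact (mxI_isPrime k).radical⟩

end
end

section
/- Let k = F_2 and f = x_0²x_1x_2x_3x_4 + x_0x_1²x_2x_3x_4 + x_0x_1x_2²x_3x_4 + x_0x_1x_2x_3²x_4 + x_0x_1x_2x_3x_4² + x_5^6 ∈ R = F_2[x_0, …, x_5]. Then the test ideal τ(f^{1/2}) (the smallest ideal a with f ∈ a^{[1]}) equals (x_0, x_1, x_2, x_3, x_4, x_5³); moreover M_1 = 5 and M_2 = 16, so M_1 − 6·2 = −7 while M_2 − 6·2² = −8; in particular the sequence M_e − (n+1)p^e does not stabilize at e = 1, and δ(f) = −8. -/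
/-!
Every `g ∈ F₂[x_0, …, x_n]` is uniquely `∑_B g_B² ∏_{i ∈ B} x_i`, the sum being over sets `B` of
variables, and the smallest ideal `a` with `g ∈ a^{[1]}` is generated by the `g_B`: each map
`g ↦ g_B` (`sqRootCoeff`) satisfies `(u² g)_B = u g_B`, hence sends `a^{[1]}` into `a`
(`sqRootCoeff_mem`). Reading off the coefficients of `f` gives `τ = (x_0, …, x_4, x_5³)`
(`testIdeal_eq`).

Put `q = 2^e`. Since `m^{[e]}` is the monomial ideal `(x_i^q)` (`mem_bracketPow_mxI`), an element of
`(m^{[e]} : τ)` outside `m^{[e]}` has a monomial with all exponents below `q`, with exponent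
`q - 1` at `x_0, …, x_4`, and exponent at least `max (q - 3) 0` at `x_5`. The least degree is
therefore `5 (q - 1) + max (q - 3) 0` (`Me_eq`), which is `5` for `e = 1` and `6 q - 8` for `e ≥ 2`.
-/


open MvPolynomial

noncomputable section

/-- The `R²`-linear projection of `R = F₂[x_0, …, x_n]` onto the coefficient of the squarefree
monomial `∏_{i ∈ B} x_i`, followed by the square root: if `g = ∑_B g_B² ∏_{i ∈ B} x_i`, it sends
`g` to `g_B`. On a monomial, it halves the exponents (rounding down) when the set of odd exponents
is `B`, and is zero otherwise. -/
def sqRootCoeff {n : ℕ} (B : Finset (Fin n)) :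
    MvPolynomial (Fin n) (ZMod 2) →ₗ[ZMod 2] MvPolynomial (Fin n) (ZMod 2) :=
  (basisMonomials (Fin n) (ZMod 2)).constr (ZMod 2) fun m =>
    if ∀ i, m i % 2 = if i ∈ B then 1 else 0 then
      monomial (m.mapRange (· / 2) (Nat.zero_div 2)) 1 else 0

lemma sqRootCoeff_monomial {n : ℕ} (B : Finset (Fin n)) (m : Fin n →₀ ℕ) :
    sqRootCoeff B (monomial m 1) = if ∀ i, m i % 2 = if i ∈ B then 1 else 0 then
      monomial (m.mapRange (· / 2) (Nat.zero_div 2)) 1 else 0 := by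
  have h := (basisMonomials (Fin n) (ZMod 2)).constr_basis (ZMod 2) (fun m =>
    if ∀ i, m i % 2 = if i ∈ B then 1 else 0 then
      monomial (m.mapRange (· / 2) (Nat.zero_div 2)) (1 : ZMod 2) else 0) m
  rw [coe_basisMonomials] at h
  exact h

lemma monomial_zmod_two {n : ℕ} (m : Fin n →₀ ℕ) (c : ZMod 2) :
    monomial m c = 0 ∨ monomial m c = monomial m 1 := by
  fin_cases c
  · left; exact monomial_zero
  · right; rfl

/-- `sqRootCoeff` is `p⁻¹`-linear, which is why it maps `a^{[1]}` into `a`. -/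
lemma sqRootCoeff_sq_mul {n : ℕ} (B : Finset (Fin n)) (u g : MvPolynomial (Fin n) (ZMod 2)) :
    sqRootCoeff B (u ^ 2 * g) = u * sqRootCoeff B g := by
  induction u using MvPolynomial.induction_on' with
  | add p q hp hq => rw [CharTwo.add_sq, add_mul, map_add, hp, hq, add_mul]
  | monomial s c =>
    rcases monomial_zmod_two s c with h | h <;> rw [h]
    · simp
    induction g using MvPolynomial.induction_on' with
    | add p q hp hq => rw [mul_add, map_add, hp, hq, map_add, mul_add]
    | monomial m d =>
      rcases monomial_zmod_two m d with h | h <;> rw [h]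
      · simp
      rw [monomial_pow, monomial_mul, one_pow, one_mul, sqRootCoeff_monomial,
        sqRootCoeff_monomial]
      have hmod : ∀ i, (2 • s + m) i % 2 = m i % 2 := fun i => by
        simp [Finsupp.add_apply]
      simp only [hmod]
      split_ifs
      · rw [monomial_mul, one_mul]
        congr 2
        ext i
        simp only [Finsupp.mapRange_apply, Finsupp.add_apply, Finsupp.smul_apply, smul_eq_mul]
        omega
      · simp

lemma sqRootCoeff_prod_X {n : ℕ} (B S : Finset (Fin n)) :
    sqRootCoeff B (∏ i ∈ S, X i) = if S = B then 1 else 0 := by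
  have h : (∏ i ∈ S, X i : MvPolynomial (Fin n) (ZMod 2)) =
      monomial (∑ i ∈ S, Finsupp.single i 1) 1 := by
    rw [monomial_sum_one]
    rfl
  have hc : ∀ i, (∑ j ∈ S, Finsupp.single j 1 : Fin n →₀ ℕ) i = if i ∈ S then 1 else 0 := by
    intro i
    rw [Finsupp.finsetSum_apply]
    simp [Finsupp.single_apply]
  rw [h, sqRootCoeff_monomial]
  simp only [hc]
  by_cases hS : S = B
  · subst hS
    rw [if_pos rfl, if_pos (fun i => by split_ifs <;> rfl)]
    have : (∑ j ∈ S, Finsupp.single j 1 : Fin n →₀ ℕ).mapRange (· / 2) (Nat.zero_div 2) = 0 := by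
      ext i
      rw [Finsupp.mapRange_apply, hc]
      split_ifs <;> rfl
    rw [this]
    rfl
  · rw [if_neg hS, if_neg]
    intro hall
    apply hS
    ext i
    have := hall i
    by_cases h1 : i ∈ S <;> by_cases h2 : i ∈ B <;> simp_all

lemma sqRootCoeff_mem {n : ℕ} (B : Finset (Fin n)) {a : Ideal (MvPolynomial (Fin n) (ZMod 2))}
    {g : MvPolynomial (Fin n) (ZMod 2)} (hg : g ∈ bracketPow a 2) : sqRootCoeff B g ∈ a := by
  refine Submodule.span_induction (p := fun g _ => ∀ h, sqRootCoeff B (h * g) ∈ a)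
    ?_ ?_ ?_ ?_ hg 1 |> fun h => by simpa using h
  · rintro _ ⟨u, hu, rfl⟩ h
    rw [mul_comm, sqRootCoeff_sq_mul]
    exact a.mul_mem_right _ hu
  · intro h; simp
  · intro x y _ _ hx hy h
    rw [mul_add, map_add]
    exact a.add_mem (hx h) (hy h)
  · intro r x _ hx h
    rw [smul_eq_mul, ← mul_assoc]
    exact hx _

/-- Since `f = ∑_{i < 5} x_i² ∏_{j ≠ i, j < 5} x_j + (x_5³)²`, the coefficients of `f` in the
basis of squarefree monomials over `R²` are the squares of the listed generators. -/
lemma testIdeal_eq (f : MvPolynomial (Fin (5 + 1)) (ZMod 2))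
    (hf : f = (X 0) ^ 2 * X 1 * X 2 * X 3 * X 4 + X 0 * (X 1) ^ 2 * X 2 * X 3 * X 4 +
          X 0 * X 1 * (X 2) ^ 2 * X 3 * X 4 + X 0 * X 1 * X 2 * (X 3) ^ 2 * X 4 +
          X 0 * X 1 * X 2 * X 3 * (X 4) ^ 2 + (X 5) ^ 6) :
    testIdeal 2 f 1 = Ideal.span {X 0, X 1, X 2, X 3, X 4, (X 5) ^ 3} := by
  have hf' : f = X 0 ^ 2 * ∏ i ∈ ({1, 2, 3, 4} : Finset (Fin (5 + 1))), X i +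
      X 1 ^ 2 * ∏ i ∈ ({0, 2, 3, 4} : Finset (Fin (5 + 1))), X i +
      X 2 ^ 2 * ∏ i ∈ ({0, 1, 3, 4} : Finset (Fin (5 + 1))), X i +
      X 3 ^ 2 * ∏ i ∈ ({0, 1, 2, 4} : Finset (Fin (5 + 1))), X i +
      X 4 ^ 2 * ∏ i ∈ ({0, 1, 2, 3} : Finset (Fin (5 + 1))), X i +
      (X 5 ^ 3) ^ 2 * ∏ i ∈ (∅ : Finset (Fin (5 + 1))), X i := by
    have prod4 : ∀ a b c d : Fin (5 + 1), a ∉ ({b, c, d} : Finset (Fin (5 + 1))) →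
        b ∉ ({c, d} : Finset (Fin (5 + 1))) → c ∉ ({d} : Finset (Fin (5 + 1))) →
        ∏ i ∈ ({a, b, c, d} : Finset (Fin (5 + 1))), (X i : MvPolynomial (Fin (5 + 1)) (ZMod 2)) =
          X a * (X b * (X c * X d)) := by
      intro a b c d h1 h2 h3
      rw [Finset.prod_insert h1, Finset.prod_insert h2, Finset.prod_insert h3,
        Finset.prod_singleton]
    rw [prod4 _ _ _ _ (by decide) (by decide) (by decide),
      prod4 _ _ _ _ (by decide) (by decide) (by decide),
      prod4 _ _ _ _ (by decide) (by decide) (by decide),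
      prod4 _ _ _ _ (by decide) (by decide) (by decide),
      prod4 _ _ _ _ (by decide) (by decide) (by decide), Finset.prod_empty, hf]
    ring
  have hφ : ∀ B : Finset (Fin (5 + 1)), sqRootCoeff B f =
      X 0 * (if {1, 2, 3, 4} = B then 1 else 0) + X 1 * (if {0, 2, 3, 4} = B then 1 else 0) +
      X 2 * (if {0, 1, 3, 4} = B then 1 else 0) + X 3 * (if {0, 1, 2, 4} = B then 1 else 0) +
      X 4 * (if {0, 1, 2, 3} = B then 1 else 0) + X 5 ^ 3 * (if ∅ = B then 1 else 0) := by
    intro B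
    rw [hf']
    simp only [map_add, sqRootCoeff_sq_mul, sqRootCoeff_prod_X]
  apply le_antisymm
  · refine sInf_le ?_
    have hmem : ∀ u ∈ ({X 0, X 1, X 2, X 3, X 4, (X 5) ^ 3} :
        Set (MvPolynomial (Fin (5 + 1)) (ZMod 2))), ∀ v, u ^ 2 * v ∈
        bracketPow (Ideal.span {X 0, X 1, X 2, X 3, X 4, (X 5) ^ 3}) 2 := fun u hu v =>
      Ideal.mul_mem_right _ _ (Ideal.subset_span ⟨u, Ideal.subset_span hu, rfl⟩)
    change f ^ (2 ^ 1 - 1) ∈ bracketPow _ (2 ^ 1)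
    norm_num only
    rw [pow_one, hf']
    refine Ideal.add_mem _ (Ideal.add_mem _ (Ideal.add_mem _ (Ideal.add_mem _
      (Ideal.add_mem _ ?_ ?_) ?_) ?_) ?_) ?_ <;> exact hmem _ (by simp) _
  · refine le_sInf fun a ha => ?_
    change f ^ (2 ^ 1 - 1) ∈ bracketPow a (2 ^ 1) at ha
    norm_num only at ha
    rw [pow_one] at ha
    have key := fun B => sqRootCoeff_mem B ha
    simp only [hφ] at key
    have h0 := key {1, 2, 3, 4}
    have h1 := key {0, 2, 3, 4}
    have h2 := key {0, 1, 3, 4}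
    have h3 := key {0, 1, 2, 4}
    have h4 := key {0, 1, 2, 3}
    have h5 := key ∅
    simp +decide only [if_true, if_false, mul_one, mul_zero, add_zero, zero_add]
      at h0 h1 h2 h3 h4 h5
    rw [Ideal.span_le]
    rintro u (rfl | rfl | rfl | rfl | rfl | rfl) <;> assumption

/-- `m^{[e]}` is the monomial ideal `(x_0^{2^e}, …, x_n^{2^e})`. -/
lemma mem_bracketPow_mxI {n e : ℕ} {g : MvPolynomial (Fin (n + 1)) (ZMod 2)} :
    g ∈ bracketPow (mxI (ZMod 2) n) (2 ^ e) ↔ ∀ m ∈ g.support, ∃ i, 2 ^ e ≤ m i := by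
  have hI : bracketPow (mxI (ZMod 2) n) (2 ^ e) = Ideal.span ((fun s => monomial s (1 : ZMod 2)) ''
      Set.range fun i : Fin (n + 1) => Finsupp.single i (2 ^ e)) := by
    apply le_antisymm
    · refine Ideal.span_le.2 ?_
      rintro _ ⟨u, hu, rfl⟩
      refine Submodule.span_induction (p := fun u _ => u ^ 2 ^ e ∈ Ideal.span _)
        ?_ ?_ ?_ ?_ hu
      · rintro _ ⟨i, rfl⟩
        refine Ideal.subset_span ⟨_, ⟨i, rfl⟩, ?_⟩
        rw [X_pow_eq_monomial]
      · rw [zero_pow (by positivity)]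
        exact Ideal.zero_mem _
      · intro x y _ _ hx hy
        rw [add_pow_char_pow]
        exact Ideal.add_mem _ hx hy
      · intro r x _ hx
        rw [smul_eq_mul, mul_pow]
        exact Ideal.mul_mem_left _ _ hx
    · refine Ideal.span_le.2 ?_
      rintro _ ⟨_, ⟨i, rfl⟩, rfl⟩
      refine Ideal.subset_span ⟨X i, Ideal.subset_span ⟨i, rfl⟩, ?_⟩
      exact X_pow_eq_monomial
  rw [hI, mem_ideal_span_monomial_image]
  simp

/-- Modulo `m^{[e]}`, the annihilator of `(x_0, …, x_4, x_5³)` is spanned by the monomials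
`(x_0 ⋯ x_4)^{q-1} x_5^j` with `q - 3 ≤ j < q`, where `q = 2^e`. The subtraction `q - 3` is
truncated, and vanishes for `e ≤ 1`. -/
lemma Me_eq (e : ℕ) : Me (ZMod 2) 5 2 (Ideal.span {X 0, X 1, X 2, X 3, X 4, (X 5) ^ 3}) e =
    5 * (2 ^ e - 1) + (2 ^ e - 3) := by
  have hq : 0 < 2 ^ e := by positivity
  set d : Fin (5 + 1) →₀ ℕ := Finsupp.equivFunOnFinite.symm
    ![2 ^ e - 1, 2 ^ e - 1, 2 ^ e - 1, 2 ^ e - 1, 2 ^ e - 1, 2 ^ e - 3] with hd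
  have hdeg : ∀ m : Fin (5 + 1) →₀ ℕ, m.degree = m 0 + m 1 + m 2 + m 3 + m 4 + m 5 := by
    intro m
    rw [Finsupp.degree_eq_sum, Fin.sum_univ_six]
  refine IsLeast.csInf_eq ⟨⟨monomial d 1, ?_, ?_, ?_⟩, ?_⟩
  · have hmem : ∀ (i : Fin (5 + 1)) (k : ℕ), 2 ^ e ≤ d i + k →
        monomial d (1 : ZMod 2) * X i ^ k ∈ bracketPow (mxI (ZMod 2) 5) (2 ^ e) := by
      intro i k hik
      rw [mem_bracketPow_mxI, X_pow_eq_monomial, monomial_mul]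
      intro m hm
      have := Finset.mem_singleton.1 (support_monomial_subset hm)
      exact ⟨i, by simpa [this] using hik⟩
    have hmem1 : ∀ i : Fin (5 + 1), 2 ^ e ≤ d i + 1 →
        monomial d (1 : ZMod 2) * X i ∈ bracketPow (mxI (ZMod 2) 5) (2 ^ e) := by
      intro i hi
      simpa using hmem i 1 hi
    rw [Submodule.mem_colon]
    intro s hs
    refine Submodule.span_induction (p := fun s _ => monomial d (1 : ZMod 2) • s ∈
      bracketPow (mxI (ZMod 2) 5) (2 ^ e)) ?_ ?_ ?_ ?_ hs
    · rintro u (rfl | rfl | rfl | rfl | rfl | rfl)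
      iterate 5 exact hmem1 _ (by simp [hd]; omega)
      exact hmem _ _ (by simp [hd]; omega)
    · rw [smul_zero]; exact Ideal.zero_mem _
    · intro x y _ _ hx hy
      rw [smul_add]; exact Ideal.add_mem _ hx hy
    · intro r x _ hx
      rw [smul_comm]; exact Ideal.mul_mem_left _ r hx
  · rw [mem_bracketPow_mxI]
    intro h
    obtain ⟨i, hi⟩ := h d (by simp)
    fin_cases i <;> simp [hd] at hi <;> omega
  · apply isHomogeneous_monomial
    rw [hdeg]
    simp [hd]
    omega
  · rintro k ⟨g, hg, hgn, hk⟩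
    rw [mem_bracketPow_mxI] at hgn
    push Not at hgn
    obtain ⟨m, hm, hlt⟩ := hgn
    have hmk : m.degree = k := by
      rw [Finsupp.degree_eq_weight_one]
      exact hk (mem_support_iff.1 hm)
    rw [Submodule.mem_colon] at hg
    -- All exponents of the monomial `m` of `g` are below `2 ^ e`, and multiplication by `x_j ^ l`
    -- changes only the exponent of `x_j`, so that one must reach `2 ^ e`.
    have key : ∀ (j : Fin (5 + 1)) (l : ℕ), (X j ^ l : MvPolynomial (Fin (5 + 1)) (ZMod 2)) ∈
        ({X 0, X 1, X 2, X 3, X 4, (X 5) ^ 3} : Set (MvPolynomial (Fin (5 + 1)) (ZMod 2))) →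
        2 ^ e ≤ m j + l := by
      intro j l hj
      have h1 := hg _ (Ideal.subset_span hj)
      rw [smul_eq_mul, mem_bracketPow_mxI] at h1
      obtain ⟨i, hi⟩ := h1 (m + Finsupp.single j l) (by
        rw [mem_support_iff, X_pow_eq_monomial, coeff_mul_monomial, mul_one]
        exact mem_support_iff.1 hm)
      have hi' := hlt i
      rw [Finsupp.add_apply, Finsupp.single_apply] at hi
      split_ifs at hi with hij
      · rwa [hij]
      · omega
    have k0 := key 0 1 (by simp)
    have k1 := key 1 1 (by simp)
    have k2 := key 2 1 (by simp)
    have k3 := key 3 1 (by simp)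
    have k4 := key 4 1 (by simp)
    have k5 := key 5 3 (by simp)
    rw [← hmk, hdeg]
    omega

/-- For `k = F₂` and
`f = x_0²x_1x_2x_3x_4 + x_0x_1²x_2x_3x_4 + x_0x_1x_2²x_3x_4 + x_0x_1x_2x_3²x_4
   + x_0x_1x_2x_3x_4² + x_5⁶ ∈ F₂[x_0, …, x_5]`, one has
`τ(f^{1/2}) = (x_0, x_1, x_2, x_3, x_4, x_5³)`, `M_1 = 5`, `M_2 = 16`, hence
`M_1 − 6·2 = −7` while `M_2 − 6·2² = −8`, and `δ(f) = −8` (the eventual constant value of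
`M_e − 6·2^e`). -/
theorem example_delta_eq_neg_eight :
    ∀ f : MvPolynomial (Fin (5 + 1)) (ZMod 2),
      f = (X 0) ^ 2 * X 1 * X 2 * X 3 * X 4 + X 0 * (X 1) ^ 2 * X 2 * X 3 * X 4 +
          X 0 * X 1 * (X 2) ^ 2 * X 3 * X 4 + X 0 * X 1 * X 2 * (X 3) ^ 2 * X 4 +
          X 0 * X 1 * X 2 * X 3 * (X 4) ^ 2 + (X 5) ^ 6 →
      testIdeal 2 f 1 =
          Ideal.span {X 0, X 1, X 2, X 3, X 4, (X 5) ^ 3} ∧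
        Me (ZMod 2) 5 2 (testIdeal 2 f 1) 1 = 5 ∧
        Me (ZMod 2) 5 2 (testIdeal 2 f 1) 2 = 16 ∧
        (Me (ZMod 2) 5 2 (testIdeal 2 f 1) 1 : ℤ) - 6 * 2 ^ 1 = -7 ∧
        (Me (ZMod 2) 5 2 (testIdeal 2 f 1) 2 : ℤ) - 6 * 2 ^ 2 = -8 ∧
        ∃ E : ℕ, ∀ e ≥ E, (Me (ZMod 2) 5 2 (testIdeal 2 f 1) e : ℤ) - 6 * 2 ^ e = -8 := by
  intro f hf
  rw [testIdeal_eq f hf]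
  simp only [Me_eq]
  refine ⟨trivial, by norm_num, by norm_num, by norm_num, by norm_num, 2, fun e he => ?_⟩
  have h4 : 2 ^ 2 ≤ 2 ^ e := Nat.pow_le_pow_right (by norm_num) he
  have hc : ((2 : ℤ) ^ e) = ((2 ^ e : ℕ) : ℤ) := by push_cast; rfl
  rw [hc]
  omega

end
end
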